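/- arXiv:2207.10483 — 2 statements merged into one kernel-verified Lean document; each statement's English description precedes it below -/
import Mathlib

section
/- Let G_1, …, G_r and H be finite simple graphs, φ : V(H) → ⊔_{d=1}^r V(G_d) a function, and u_h ∈ ℂ^{π(φ(h))} unit vectors (h ∈ V(H)) such that for all distinct non-adjacent h, h' ∈ V(H), either ¬(φ(h) ≃ φ(h')) or ⟨u_h, u_{h'}⟩ = 0. Then H_f^ℂ(H) ≤ ∑_{d=1}^r d·H_f^ℂ(G_d), where H_f^ℂ is the fractional Haemers bound over ℂ. -/
open scoped Kronecker
open Matrix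

namespace NCG
/-- For vertices of a disjoint family of graphs: `g ≃ g'` iff they lie in the same member
graph and are adjacent or equal there. -/
def SimRel {r : ℕ} {V : Fin r → Type} (G : ∀ d, SimpleGraph (V d)) :
    (Σ d, V d) → (Σ d, V d) → Prop :=
  fun p q => ∃ e : p.1 = q.1,
    (G q.1).Adj (cast (congrArg V e) p.2) q.2 ∨ cast (congrArg V e) p.2 = q.2

/-- The fractional Haemers bound of a graph over a field `F`. -/
noncomputable def fracHaemers (F : Type) [Field F] {V : Type} [Fintype V] [DecidableEq V]
    (G : SimpleGraph V) : ℝ :=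
  sInf {t : ℝ | ∃ (a b : ℕ) (S : V → Submodule F (Fin a → F)), 0 < b ∧
    (∀ g, Module.finrank F (S g) = b) ∧
    (∀ g, S g ⊓ (⨆ g' ∈ {g' : V | g' ≠ g ∧ ¬ G.Adj g g'}, S g') = ⊥) ∧
    t = (a : ℝ) / (b : ℝ)}

/-!
Tensoring an `a/b`-subspace representation with `F^k` turns it into a `ka/kb`-representation, so
near-optimal representations `S_d` of the graphs `G_d` may be assumed to have a common `b`. For
`φ h = (d, g)`, give the vertex `h` of `H` the subspace `u_h ⊗ S_d(g)` of the `d`-th summand of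
`⨁ d, F^(n_d) ⊗ W_d`, where `W_d` is the ambient space of `S_d`. Contraction against `w_h` in the
`d`-th summand is a left inverse of `u_h ⊗ ·`; it sends the subspace of a vertex `h'` distinct from
and non-adjacent to `h` to `0` if `φ h'` lies in another graph or `⟨w_h, u_{h'}⟩ = 0`, and otherwise
into some `S_d(g')` with `g'` distinct from and non-adjacent to `g`. The subspaces therefore
represent `H`, in dimension `∑ d, n_d * dim W_d`. Only the bilinear pairing of `w_h` with `u_h`
matters, so any field will do; for complex unit vectors `w_h` is the conjugate of `u_h`.
-/

section SubspaceRep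

variable {F V W W' : Type*} [Field F] [AddCommGroup W] [Module F W] [AddCommGroup W'] [Module F W']
  {G : SimpleGraph V} {a b : ℕ} {S : V → Submodule F W}

/-- The sum of the subspaces attached to the vertices distinct from and non-adjacent to `g`; in a
subspace representation it meets `S g` trivially. -/
def nonNbrSpan (G : SimpleGraph V) (S : V → Submodule F W) (g : V) : Submodule F W :=
  ⨆ g' ∈ {g' : V | g' ≠ g ∧ ¬ G.Adj g g'}, S g'

lemma nonNbrSpan_le_iff {g : V} {N : Submodule F W} :
    nonNbrSpan G S g ≤ N ↔ ∀ g', Gᶜ.Adj g g' → S g' ≤ N := by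
  simp [nonNbrSpan, SimpleGraph.compl_adj, ne_comm]

lemma le_nonNbrSpan {g g' : V} (h : Gᶜ.Adj g g') : S g' ≤ nonNbrSpan G S g :=
  nonNbrSpan_le_iff.1 le_rfl _ h

/-- A representation of `G` by `b`-dimensional subspaces of an arbitrary space `W`. Leaving `W`
abstract allows tensor products and direct sums as ambient spaces. -/
structure IsSubspaceRep (G : SimpleGraph V) (b : ℕ) (S : V → Submodule F W) : Prop where
  finrank_eq : ∀ g, Module.finrank F (S g) = b
  disjoint_nonNbrSpan : ∀ g, Disjoint (S g) (nonNbrSpan G S g)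

variable (F) in
/-- Existence of an `a/b`-subspace representation of `G` over `F`, in the coordinate space `F^a`
used by `fracHaemers`. The condition `0 < b` is not included. -/
def HasSubspaceRep (G : SimpleGraph V) (a b : ℕ) : Prop :=
  ∃ S : V → Submodule F (Fin a → F), IsSubspaceRep G b S

namespace IsSubspaceRep

lemma of_leftInverse {M : V → Type*} [∀ g, AddCommGroup (M g)] [∀ g, Module F (M g)]
    (E : ∀ g, M g →ₗ[F] W) (C : ∀ g, W →ₗ[F] M g)
    (hCE : ∀ g, Function.LeftInverse (C g) (E g)) {T N : ∀ g, Submodule F (M g)}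
    (hb : ∀ g, Module.finrank F (T g) = b) (hTN : ∀ g, Disjoint (T g) (N g))
    (hN : ∀ g g', Gᶜ.Adj g g' → (T g').map (E g') ≤ (N g).comap (C g)) :
    IsSubspaceRep G b fun g => (T g).map (E g) where
  finrank_eq g := by
    rw [← hb g, ((T g).equivMapOfInjective (E g) (hCE g).injective).finrank_eq]
  disjoint_nonNbrSpan g := by
    rw [Submodule.disjoint_def]
    rintro _ ⟨t, htT, rfl⟩ hspan
    have htN : C g (E g t) ∈ N g := nonNbrSpan_le_iff.2 (hN g) hspan
    rw [hCE g t] at htN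
    rw [Submodule.disjoint_def.1 (hTN g) t htT htN, map_zero]

lemma map_equiv (hS : IsSubspaceRep G b S) (e : W ≃ₗ[F] W') :
    IsSubspaceRep G b fun g => (S g).map (e : W →ₗ[F] W') := by
  refine of_leftInverse (fun _ => (e : W →ₗ[F] W')) (fun _ => (e.symm : W' →ₗ[F] W))
    (fun _ => e.symm_apply_apply) hS.finrank_eq hS.disjoint_nonNbrSpan ?_
  rintro g g' hadj _ ⟨s, hs, rfl⟩
  simpa using le_nonNbrSpan hadj hs

lemma hasSubspaceRep [FiniteDimensional F W] (hS : IsSubspaceRep G b S)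
    (ha : Module.finrank F W = a) : HasSubspaceRep F G a b :=
  ⟨_, hS.map_equiv (LinearEquiv.ofFinrankEq W (Fin a → F) (by simpa using ha))⟩

lemma range_compLeft [FiniteDimensional F W] (hS : IsSubspaceRep G b S) (κ : Type*) [Fintype κ] :
    IsSubspaceRep G (Fintype.card κ * b) fun g => ((S g).subtype.compLeft κ).range where
  finrank_eq g := by
    rw [LinearMap.finrank_range_of_inj ((S g).injective_subtype.comp_left),
      Module.finrank_pi_fintype]
    simp [hS.finrank_eq]
  disjoint_nonNbrSpan g := by
    have hspan : nonNbrSpan G (fun g => ((S g).subtype.compLeft κ).range) g ≤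
        Submodule.pi Set.univ fun _ => nonNbrSpan G S g := by
      refine nonNbrSpan_le_iff.2 fun g' hadj => ?_
      rw [LinearMap.range_compLeft, Submodule.range_subtype]
      exact Submodule.pi_mono fun _ _ => le_nonNbrSpan hadj
    rw [Submodule.disjoint_def]
    rintro _ ⟨s, rfl⟩ hs
    exact funext fun i =>
      Submodule.disjoint_def.1 (hS.disjoint_nonNbrSpan g) _ (s i).2 (hspan hs i trivial)

end IsSubspaceRep

lemma HasSubspaceRep.mul (h : HasSubspaceRep F G a b) (k : ℕ) :
    HasSubspaceRep F G (k * a) (k * b) := by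
  obtain ⟨S, hS⟩ := h
  simpa using (hS.range_compLeft (Fin k)).hasSubspaceRep (a := k * a)
    (by simp [Module.finrank_pi_fintype])

variable (F G) in
lemma hasSubspaceRep_card_one [Fintype V] : HasSubspaceRep F G (Fintype.card V) 1 := by
  classical
  have hcoord := IsSubspaceRep.of_leftInverse (G := G) (T := fun _ => ⊤) (N := fun _ => ⊥)
    (LinearMap.single F fun _ : V => F) (fun g => (LinearMap.proj g : (V → F) →ₗ[F] F))
    (fun g x => by simp) (fun _ => (finrank_top F F).trans (Module.finrank_self F))
    (fun _ => disjoint_bot_right) fun g g' hadj => by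
      rintro _ ⟨x, -, rfl⟩
      rw [Submodule.mem_comap, Submodule.mem_bot, LinearMap.proj_apply]
      exact Pi.single_eq_of_ne (M := fun _ => F) hadj.ne x
  exact hcoord.hasSubspaceRep (by simp)

end SubspaceRep

section FracHaemers

variable {F V : Type} [Field F] [Fintype V] [DecidableEq V] {G : SimpleGraph V} {a b : ℕ}

variable (F G) in
lemma fracHaemers_eq_sInf :
    fracHaemers F G =
      sInf {t : ℝ | ∃ a b : ℕ, 0 < b ∧ HasSubspaceRep F G a b ∧ t = (a : ℝ) / b} := by
  refine congrArg sInf (Set.ext fun t => ⟨?_, ?_⟩)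
  · rintro ⟨a, b, S, hb, hfin, hbot, rfl⟩
    exact ⟨a, b, hb, ⟨S, hfin, fun g => disjoint_iff.2 (hbot g)⟩, rfl⟩
  · rintro ⟨a, b, hb, ⟨S, hfin, hdisj⟩, rfl⟩
    exact ⟨a, b, S, hb, hfin, fun g => (hdisj g).eq_bot, rfl⟩

lemma HasSubspaceRep.fracHaemers_le (h : HasSubspaceRep F G a b) (hb : 0 < b) :
    fracHaemers F G ≤ (a : ℝ) / b := by
  rw [fracHaemers_eq_sInf]
  refine csInf_le ⟨0, ?_⟩ ⟨a, b, hb, h, rfl⟩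
  rintro _ ⟨a', b', -, -, rfl⟩
  positivity

lemma exists_hasSubspaceRep_div_lt {t : ℝ} (ht : fracHaemers F G < t) :
    ∃ a b : ℕ, 0 < b ∧ HasSubspaceRep F G a b ∧ (a : ℝ) / b < t := by
  rw [fracHaemers_eq_sInf] at ht
  obtain ⟨_, ⟨a, b, hb, h, rfl⟩, hlt⟩ :=
    exists_lt_of_csInf_lt (by exact ⟨_, _, 1, one_pos, hasSubspaceRep_card_one F G, rfl⟩) ht
  exact ⟨a, b, hb, h, hlt⟩

lemma exists_hasSubspaceRep_div_lt_common {ι : Type*} [Finite ι] {V : ι → Type}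
    [∀ d, Fintype (V d)] [∀ d, DecidableEq (V d)] {G : ∀ d, SimpleGraph (V d)} {t : ι → ℝ}
    (ht : ∀ d, fracHaemers F (G d) < t d) :
    ∃ (b : ℕ) (a : ι → ℕ), 0 < b ∧
      ∀ d, HasSubspaceRep F (G d) (a d) b ∧ (a d : ℝ) / b < t d := by
  cases nonempty_fintype ι
  choose a b hb hrep hlt using fun d => exists_hasSubspaceRep_div_lt (ht d)
  have hpos : 0 < ∏ d, b d := Finset.prod_pos fun d _ => hb d
  choose k hk using fun d => Finset.dvd_prod_of_mem b (Finset.mem_univ d)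
  have hk0 (d : ι) : (k d : ℝ) ≠ 0 :=
    Nat.cast_ne_zero.2 (right_ne_zero_of_mul (hk d ▸ hpos.ne'))
  refine ⟨∏ d, b d, fun d => k d * a d, hpos, fun d => ?_⟩
  rw [hk d, mul_comm (b d)]
  refine ⟨(hrep d).mul (k d), ?_⟩
  push_cast
  rw [mul_div_mul_left _ _ (hk0 d)]
  exact hlt d

end FracHaemers

section DirectSum

variable {F ι : Type*} [Field F] {K : ι → Type*} {W : ι → Type*} [∀ d, AddCommGroup (W d)]
  [∀ d, Module F (W d)]

/-- The map `x ↦ u ⊗ x` into the `d`-th summand of `⨁ d, F^(K d) ⊗ W d`, where `F^(K d) ⊗ W d` is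
encoded as `K d → W d`. It places a subspace of `W d` in the common ambient space. -/
def tensorEmbed [DecidableEq ι] (d : ι) (u : K d → F) : W d →ₗ[F] ∀ d, K d → W d :=
  LinearMap.single F (fun d => K d → W d) d ∘ₗ LinearMap.pi fun i => u i • LinearMap.id

/-- Contraction of the `d`-th summand of `⨁ d, F^(K d) ⊗ W d`, encoded as in `tensorEmbed`, against
`w` (bilinearly, without conjugation). It provides left inverses of `tensorEmbed`. -/
def tensorContract [∀ d, Fintype (K d)] (d : ι) (w : K d → F) : (∀ d, K d → W d) →ₗ[F] W d :=
  (∑ i, w i • LinearMap.proj i) ∘ₗ LinearMap.proj d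

variable [DecidableEq ι] [∀ d, Fintype (K d)]

lemma tensorContract_tensorEmbed (d : ι) (w u : K d → F) (x : W d) :
    tensorContract d w (tensorEmbed d u x) = (w ⬝ᵥ u) • x := by
  simp [tensorContract, tensorEmbed, dotProduct, Finset.sum_smul, smul_smul]

lemma leftInverse_tensorContract_tensorEmbed (d : ι) {w u : K d → F} (hwu : w ⬝ᵥ u = 1) :
    Function.LeftInverse (tensorContract (W := W) d w) (tensorEmbed d u) := fun x => by
  rw [tensorContract_tensorEmbed, hwu, one_smul]

lemma tensorContract_tensorEmbed_of_ne {d d' : ι} (hd : d ≠ d') (w : K d → F) (u : K d' → F)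
    (x : W d') : tensorContract d w (tensorEmbed d' u x) = 0 := by
  simp [tensorContract, tensorEmbed, Pi.single_eq_of_ne hd]

end DirectSum

section SimRel

variable {r : ℕ} {V : Fin r → Type} {G : ∀ d, SimpleGraph (V d)}

lemma compl_adj_of_not_simRel {d : Fin r} {g g' : V d} (h : ¬ SimRel G ⟨d, g⟩ ⟨d, g'⟩) :
    (G d)ᶜ.Adj g g' :=
  (SimpleGraph.compl_adj _ _ _).2
    ⟨fun heq => h ⟨rfl, Or.inr heq⟩, fun hadj => h ⟨rfl, Or.inl hadj⟩⟩

lemma map_tensorEmbed_le_comap_tensorContract {F : Type*} [Field F] {n : Fin r → ℕ}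
    {W : Fin r → Type*} [∀ d, AddCommGroup (W d)] [∀ d, Module F (W d)]
    (S : ∀ d, V d → Submodule F (W d)) {p q : Σ d, V d} {w : Fin (n p.1) → F} {u : Fin (n q.1) → F}
    (h : ¬ SimRel G p q ∨ ∀ e : p.1 = q.1, w ⬝ᵥ (fun i => u (Fin.cast (congrArg n e) i)) = 0) :
    (S q.1 q.2).map (tensorEmbed (K := fun d => Fin (n d)) q.1 u) ≤
      (nonNbrSpan (G p.1) (S p.1) p.2).comap (tensorContract (K := fun d => Fin (n d)) p.1 w) := by
  obtain ⟨d, g⟩ := p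
  obtain ⟨d', g'⟩ := q
  rintro _ ⟨x, hx, rfl⟩
  rw [Submodule.mem_comap]
  by_cases hd : d = d'
  · subst hd
    rw [tensorContract_tensorEmbed]
    rcases h with hsim | horth
    · exact Submodule.smul_mem _ _ (le_nonNbrSpan (compl_adj_of_not_simRel hsim) hx)
    · have hwu : w ⬝ᵥ u = 0 := horth rfl
      simp [hwu]
  · simp [tensorContract_tensorEmbed_of_ne hd]

lemma hasSubspaceRep_sum_mul {F VH : Type*} [Field F] {H : SimpleGraph VH} {n a : Fin r → ℕ} {b : ℕ}
    (hG : ∀ d, HasSubspaceRep F (G d) (a d) b)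
    (φ : VH → Σ d, V d) (u w : ∀ h : VH, Fin (n (φ h).1) → F) (hunit : ∀ h, w h ⬝ᵥ u h = 1)
    (horth : ∀ h h', h ≠ h' → ¬ H.Adj h h' →
      (¬ SimRel G (φ h) (φ h') ∨
        ∀ e : (φ h).1 = (φ h').1, w h ⬝ᵥ (fun i => u h' (Fin.cast (congrArg n e) i)) = 0)) :
    HasSubspaceRep F H (∑ d, n d * a d) b := by
  choose S hS using hG
  have hrep := IsSubspaceRep.of_leftInverse (G := H) _ _
    (fun h => leftInverse_tensorContract_tensorEmbed (K := fun d => Fin (n d)) (φ h).1 (hunit h))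
    (fun h => (hS (φ h).1).finrank_eq (φ h).2)
    (fun h => (hS (φ h).1).disjoint_nonNbrSpan (φ h).2)
    fun h h' hadj => map_tensorEmbed_le_comap_tensorContract S (horth h h' hadj.ne hadj.2)
  exact hrep.hasSubspaceRep (by simp [Module.finrank_pi_fintype])

end SimRel

theorem fracHaemersC_sum_bound_general {F : Type} [Field F]
    {r : ℕ} {V : Fin r → Type} [∀ d, Fintype (V d)] [∀ d, DecidableEq (V d)]
    (G : ∀ d, SimpleGraph (V d))
    {VH : Type} [Fintype VH] [DecidableEq VH] (H : SimpleGraph VH) {n : Fin r → ℕ}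
    (φ : VH → Σ d, V d) (u w : ∀ h : VH, Fin (n (φ h).1) → F) (hunit : ∀ h, w h ⬝ᵥ u h = 1)
    (horth : ∀ h h', h ≠ h' → ¬ H.Adj h h' →
      (¬ SimRel G (φ h) (φ h') ∨
        ∀ e : (φ h).1 = (φ h').1, w h ⬝ᵥ (fun i => u h' (Fin.cast (congrArg n e) i)) = 0)) :
    fracHaemers F H ≤ ∑ d, (n d : ℝ) * fracHaemers F (G d) := by
  have hε (ε : ℝ) (hpos : 0 < ε) :
      fracHaemers F H ≤ ∑ d, (n d : ℝ) * (fracHaemers F (G d) + ε) := by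
    obtain ⟨b, a, hb, hG⟩ := exists_hasSubspaceRep_div_lt_common (F := F) (G := G)
      fun d => lt_add_of_pos_right (fracHaemers F (G d)) hpos
    calc fracHaemers F H ≤ ((∑ d, n d * a d : ℕ) : ℝ) / b :=
          (hasSubspaceRep_sum_mul (fun d => (hG d).1) φ u w hunit horth).fracHaemers_le hb
      _ = ∑ d, (n d : ℝ) * (a d / b) := by
          push_cast
          simp only [Finset.sum_div, mul_div_assoc]
      _ ≤ ∑ d, (n d : ℝ) * (fracHaemers F (G d) + ε) := by
          gcongr with d
          exact (hG d).2.le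
  have hcont : Continuous fun ε : ℝ => ∑ d, (n d : ℝ) * (fracHaemers F (G d) + ε) := by fun_prop
  have hlim := hcont.tendsto' 0 (∑ d, (n d : ℝ) * fracHaemers F (G d)) (by simp only [add_zero])
  exact ge_of_tendsto (hlim.mono_left nhdsWithin_le_nhds)
    ((eventually_mem_nhdsWithin (s := Set.Ioi 0)).mono hε)

theorem fracHaemersC_sum_bound
    {r : ℕ} {V : Fin r → Type} [∀ d, Fintype (V d)] [∀ d, DecidableEq (V d)]
    (G : ∀ d, SimpleGraph (V d))
    {VH : Type} [Fintype VH] [DecidableEq VH] (H : SimpleGraph VH)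
    (φ : VH → Σ d, V d) (u : ∀ h : VH, Fin ((φ h).1.1 + 1) → ℂ)
    (hunit : ∀ h, star (u h) ⬝ᵥ u h = 1)
    (horth : ∀ h h', h ≠ h' → ¬ H.Adj h h' →
      (¬ SimRel G (φ h) (φ h') ∨
        ∀ e : (φ h).1 = (φ h').1,
          star (u h) ⬝ᵥ
            (fun i => u h' (Fin.cast (congrArg (fun d : Fin r => d.1 + 1) e) i)) = 0)) :
    fracHaemers ℂ H ≤ ∑ d : Fin r, ((d.1 + 1 : ℕ) : ℝ) * fracHaemers ℂ (G d) :=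
  fracHaemersC_sum_bound_general G H φ u (fun h => star (u h)) hunit horth

end NCG
end

section
/- Let g : ℕ_{>0} → ℝ satisfy g(mn) = g(m)g(n) for all m, n ≥ 1, let g be nondecreasing, and suppose g(2) > 0. Then g(d) = d^α for every d ≥ 1, where α = log₂ g(2). -/
/-!
Comparing `m ^ p` with `n ^ q` compares `p * log m` with `q * log n`, and, since `g` is monotone and
commutes with powers, also `p * log (g m)` with `q * log (g n)`. So every fraction `q / p` above
`log m / log n` is above `log (g m) / log (g n)`. Exchanging `m` and `n`, the two ratios agree.
-/

namespace NCG

theorem nonpos_of_forall_nsmul_le {G : Type*} [AddCommMonoid G] [LinearOrder G]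
    [IsOrderedCancelAddMonoid G] [Archimedean G] {x C : G} (h : ∀ k : ℕ, k • x ≤ C) : x ≤ 0 := by
  by_contra! hx
  obtain ⟨k, hk⟩ := exists_lt_nsmul hx C
  exact hk.not_ge (h k)

theorem exists_nsmul_mem_Ico {G : Type*} [AddCommMonoid G] [LinearOrder G]
    [IsOrderedCancelAddMonoid G] [Archimedean G] {a y : G} (ha : 0 ≤ a) (hy : 0 < y) :
    ∃ q : ℕ, q • y ∈ Set.Ico a (a + y) := by
  have hex : ∃ q : ℕ, a ≤ q • y := Archimedean.arch a hy
  refine ⟨Nat.find hex, Nat.find_spec hex, ?_⟩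
  cases hq : Nat.find hex with
  | zero => simpa only [zero_nsmul] using add_pos_of_nonneg_of_pos ha hy
  | succ k =>
    have hk : k • y < a := not_le.mp (Nat.find_min hex (hq ▸ k.lt_succ_self))
    simpa only [succ_nsmul] using add_lt_add_left hk y

theorem mul_le_mul_of_forall_natCast_mul_le_imp {R : Type*} [CommRing R] [LinearOrder R]
    [IsStrictOrderedRing R] [Archimedean R] {x y u v : R} (hx : 0 ≤ x) (hy : 0 ≤ y)
    (h : ∀ p q : ℕ, p * x ≤ q * y → p * u ≤ q * v) : u * y ≤ x * v := by
  have hv : 0 ≤ v := by simpa using h 0 1 (by simpa using hy)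
  rcases hy.eq_or_lt with rfl | hy
  · simpa using mul_nonneg hx hv
  -- Approximating `p * x` by a multiple of `y` costs at most `y`, an error independent of `p`.
  refine sub_nonpos.mp (nonpos_of_forall_nsmul_le (C := y * v) fun p ↦ ?_)
  obtain ⟨q, hq_ge, hq_lt⟩ := exists_nsmul_mem_Ico (mul_nonneg p.cast_nonneg hx) hy
  rw [nsmul_eq_mul] at hq_ge hq_lt ⊢
  have hchain : p * (u * y) ≤ (p * x + y) * v := calc
    p * (u * y) = p * u * y := by ring
    _ ≤ q * v * y := mul_le_mul_of_nonneg_right (h p q hq_ge) hy.le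
    _ = q * y * v := by ring
    _ ≤ (p * x + y) * v := mul_le_mul_of_nonneg_right hq_lt.le hv
  linarith

theorem map_one_of_map_mul_of_map_ne_zero {M : Type*} [MulZeroOneClass M]
    [IsRightCancelMulZero M] {g : ℕ → M}
    (hmul : ∀ m n, 1 ≤ m → 1 ≤ n → g (m * n) = g m * g n) {n : ℕ} (hn : 1 ≤ n) (hgn : g n ≠ 0) :
    g 1 = 1 :=
  mul_right_cancel₀ hgn <| by rw [← hmul 1 n le_rfl hn, one_mul, one_mul]

theorem map_pow_of_map_mul {M : Type*} [Monoid M] {g : ℕ → M} (hone : g 1 = 1)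
    (hmul : ∀ m n, 1 ≤ m → 1 ≤ n → g (m * n) = g m * g n) (n : ℕ) (hn : 1 ≤ n) (k : ℕ) :
    g (n ^ k) = g n ^ k := by
  induction k with
  | zero => rw [pow_zero, pow_zero, hone]
  | succ k ih => rw [pow_succ, hmul _ _ (Nat.one_le_pow _ _ hn) hn, ih, pow_succ]

section PowMonotone

variable {g : ℕ → ℝ} {m n : ℕ}

theorem one_le_map_of_map_pow (hpow : ∀ n, 1 ≤ n → ∀ k, g (n ^ k) = g n ^ k)
    (hmono : MonotoneOn g (Set.Ici 1)) (hn : 1 ≤ n) : 1 ≤ g n := calc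
  1 = g 1 := by simpa using (hpow 1 le_rfl 0).symm
  _ ≤ g n := hmono Set.self_mem_Ici hn hn

theorem natCast_mul_log_map_le (hpow : ∀ n, 1 ≤ n → ∀ k, g (n ^ k) = g n ^ k)
    (hmono : MonotoneOn g (Set.Ici 1)) (hm : 1 ≤ m) (hn : 1 ≤ n) {p q : ℕ}
    (h : p * Real.log m ≤ q * Real.log n) : p * Real.log (g m) ≤ q * Real.log (g n) := by
  have hm_pow : 1 ≤ m ^ p := Nat.one_le_pow _ _ hm
  have hn_pow : 1 ≤ n ^ q := Nat.one_le_pow _ _ hn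
  have hle : m ^ p ≤ n ^ q := by
    rw [← Real.log_pow, ← Real.log_pow, Real.log_le_log_iff (by positivity) (by positivity)] at h
    exact_mod_cast h
  have hgm : 0 < g m := one_pos.trans_le (one_le_map_of_map_pow hpow hmono hm)
  have hg_le : g m ^ p ≤ g n ^ q := by
    rw [← hpow m hm, ← hpow n hn]
    exact hmono hm_pow hn_pow hle
  rw [← Real.log_pow, ← Real.log_pow]
  exact Real.log_le_log (pow_pos hgm p) hg_le

theorem log_map_mul_log_le (hpow : ∀ n, 1 ≤ n → ∀ k, g (n ^ k) = g n ^ k)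
    (hmono : MonotoneOn g (Set.Ici 1)) (hm : 1 ≤ m) (hn : 1 ≤ n) :
    Real.log (g m) * Real.log n ≤ Real.log m * Real.log (g n) :=
  mul_le_mul_of_forall_natCast_mul_le_imp (Real.log_natCast_nonneg m) (Real.log_natCast_nonneg n)
    fun _ _ ↦ natCast_mul_log_map_le hpow hmono hm hn

theorem log_map_mul_log_eq (hpow : ∀ n, 1 ≤ n → ∀ k, g (n ^ k) = g n ^ k)
    (hmono : MonotoneOn g (Set.Ici 1)) (hm : 1 ≤ m) (hn : 1 ≤ n) :
    Real.log (g m) * Real.log n = Real.log m * Real.log (g n) := by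
  refine (log_map_mul_log_le hpow hmono hm hn).antisymm ?_
  simpa only [mul_comm] using log_map_mul_log_le hpow hmono hn hm

end PowMonotone

theorem multiplicative_monotone_eq_rpow_general {g : ℕ → ℝ}
    (hpow : ∀ n, 1 ≤ n → ∀ k, g (n ^ k) = g n ^ k) (hmono : MonotoneOn g (Set.Ici 1))
    {b : ℕ} (hb : 1 < b) {d : ℕ} (hd : 1 ≤ d) : g d = (d : ℝ) ^ Real.logb b (g b) := by
  have hgd : 0 < g d := one_pos.trans_le (one_le_map_of_map_pow hpow hmono hd)
  have hlogb : Real.log b ≠ 0 := (Real.log_pos (by exact_mod_cast hb)).ne'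
  symm
  calc (d : ℝ) ^ Real.logb b (g b)
      = Real.exp (Real.log d * Real.log (g b) / Real.log b) := by
        rw [Real.rpow_def_of_pos (by exact_mod_cast hd), Real.logb, mul_div_assoc]
    _ = Real.exp (Real.log (g d)) := by
        rw [← log_map_mul_log_eq hpow hmono hd hb.le, mul_div_cancel_right₀ _ hlogb]
    _ = g d := Real.exp_log hgd

theorem multiplicative_monotone_eq_rpow
    (g : ℕ → ℝ) (hmul : ∀ m n, 1 ≤ m → 1 ≤ n → g (m * n) = g m * g n)
    (hmono : ∀ m n, 1 ≤ m → m ≤ n → g m ≤ g n) (hpos : 0 < g 2) :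
    ∀ d, 1 ≤ d → g d = (d : ℝ) ^ Real.logb 2 (g 2) := by
  have hone : g 1 = 1 := map_one_of_map_mul_of_map_ne_zero hmul one_le_two hpos.ne'
  exact fun _ hd ↦ multiplicative_monotone_eq_rpow_general (map_pow_of_map_mul hone hmul)
    (fun m hm n _ hmn ↦ hmono m n hm hmn) one_lt_two hd

end NCG
end
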